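/- arXiv:0706.0750 — 2 statements merged into one kernel-verified Lean document; each statement's English description precedes it below -/
import Mathlib

section
/- Fix an integer n ≥ 2 and positive real numbers p(k,j) > 0 for k ∈ {1,…,n} and integers j ≥ 1. Then s₁ = ∏_{k=1}^n p(k,1), and for every q ≥ 2, s_q / ∏_{j=1}^{q−1} s_j^{n−1} = ( ∏_{k=1}^n ∏_{j=1}^{q−1} p(k,j)^{(n−1)·n^{q−j−1}} ) · ( ∏_{k=1}^n p(k,q) ). -/
/-- The weight `t(w)` of a word `w` over the alphabet `Fin n`: if
`w = i₁^{j₁} i₂^{j₂} ⋯ i_m^{j_m}` is the run decomposition of `w` (consecutive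
letters in different runs are distinct), then `t(w) = ∏_t p (i_t) (j_t)`. -/
noncomputable def runProd {n : ℕ} (p : Fin n → ℕ → ℝ) (w : List (Fin n)) : ℝ :=
  ((w.splitBy (· == ·)).map (fun r =>
    match r with
    | [] => 1
    | a :: t => p a (t.length + 1))).prod

/-- `sWord n p q = ∏_w t(w)`, the product over all `n^q` words `w` of length `q`. -/
noncomputable def sWord (n : ℕ) (p : Fin n → ℕ → ℝ) (q : ℕ) : ℝ :=
  ∏ f : Fin q → Fin n, runProd p (List.ofFn f)

/-! Let `N` be the size of the alphabet and let `E_m(q)` be the product of the weights of the words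
`k^m v` over all letters `k` and all words `v` of length `q`, so that `s_{q+1} = E_1(q)`. For
`m ≥ 1`, look at the letter `l` that follows `k^m` in the words counted by `E_m(q + 1)`. The case
`l = k` contributes `E_{m+1}(q)`. If `l ≠ k`, the initial run has length exactly `m` and its weight
splits off, once for each of the `(N - 1) N^q` continuations; as each letter `l` is met for `N - 1`
values of `k`, the remaining weights multiply to `s_{q+1}^(N-1)`. Iterating
`E_m(q + 1) = E_{m+1}(q) · ∏_k p(k,m)^((N-1) N^q) · s_{q+1}^(N-1)` until `q = 0`, where
`E_m(0) = ∏_k p(k,m)`, and starting from `m = 1` gives the formula. -/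

open Finset

section RunWeight

variable {α M : Type*} [DecidableEq α]

/-- The weight `∏_t p (i_t) (j_t)` of a word with run decomposition `i₁^{j₁} ⋯ i_m^{j_m}`, extending
`runProd` to an arbitrary alphabet and to values in a monoid. Runs are nonempty, so the default
value `1` for an empty run is never taken. -/
def runWeight [Monoid M] (p : α → ℕ → M) (w : List α) : M :=
  ((w.splitBy (· == ·)).map fun r => r.head?.elim 1 fun k => p k r.length).prod

theorem runWeight_append_cons [Monoid M] (p : α → ℕ → M) {u : List α} {l : α}
    (h : ∀ x ∈ u.getLast?, x ≠ l) (v : List α) :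
    runWeight p (u ++ l :: v) = runWeight p u * runWeight p (l :: v) := by
  unfold runWeight
  rw [List.splitBy_append_cons v (by simpa using h), List.map_append, List.prod_append]

theorem runWeight_replicate [Monoid M] (p : α → ℕ → M) (k : α) {m : ℕ} (hm : m ≠ 0) :
    runWeight p (List.replicate m k) = p k m := by
  have hrun : (List.replicate m k).splitBy (· == ·) = [List.replicate m k] :=
    List.splitBy_of_isChain (by simpa using hm) (List.isChain_replicate_of_rel m (by simp))
  simp [runWeight, hrun, List.head?_replicate, hm]

theorem runWeight_ne_zero [MonoidWithZero M] [Nontrivial M] [NoZeroDivisors M] {p : α → ℕ → M}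
    (hp : ∀ k, ∀ j, 1 ≤ j → p k j ≠ 0) (w : List α) : runWeight p w ≠ 0 := by
  refine List.prod_ne_zero fun h => ?_
  obtain ⟨r, -, hr⟩ := List.mem_map.1 h
  rcases r with _ | ⟨a, t⟩
  · exact one_ne_zero hr
  · exact hp a _ (Nat.le_add_left 1 _) hr

end RunWeight

section FiniteProducts

variable {α M : Type*} [CommMonoid M]

theorem prod_ofFn_succ [Fintype α] (g : List α → M) (q : ℕ) :
    ∏ f : Fin (q + 1) → α, g (List.ofFn f) = ∏ l, ∏ f : Fin q → α, g (l :: List.ofFn f) := by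
  rw [← (Fin.consEquiv fun _ => α).prod_comp, Fintype.prod_prod_type]
  simp [Fin.consEquiv, List.ofFn_succ]

theorem prod_prod_erase [DecidableEq α] (s : Finset α) (g : α → M) :
    ∏ k ∈ s, ∏ l ∈ s.erase k, g l = (∏ l ∈ s, g l) ^ (#s - 1) := by
  have hswap : ∏ k ∈ s, ∏ l ∈ s.erase k, g l = ∏ l ∈ s, ∏ _k ∈ s.erase l, g l :=
    prod_comm' fun k l => by simp only [mem_erase]; tauto
  rw [hswap, ← prod_pow]
  exact prod_congr rfl fun l hl => by rw [prod_const, card_erase_of_mem hl]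

end FiniteProducts

section WordProducts

variable {α M : Type*} [Fintype α] [DecidableEq α] [CommMonoid M] (p : α → ℕ → M)

/-- The product of the weights of all words of length `q`; it extends `sWord` to an arbitrary finite
alphabet and to values in an arbitrary commutative monoid. -/
def wordProd (q : ℕ) : M :=
  ∏ f : Fin q → α, runWeight p (List.ofFn f)

/-- The product of the weights of all words that extend the word `u` by `q` further letters on the
right. -/
def extensionProd (u : List α) (q : ℕ) : M :=
  ∏ f : Fin q → α, runWeight p (u ++ List.ofFn f)

theorem extensionProd_zero (u : List α) : extensionProd p u 0 = runWeight p u := by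
  simp [extensionProd]

theorem extensionProd_succ (u : List α) (q : ℕ) :
    extensionProd p u (q + 1) = ∏ l, extensionProd p (u ++ [l]) q := by
  simp only [extensionProd, List.append_assoc, List.singleton_append]
  exact prod_ofFn_succ (fun v => runWeight p (u ++ v)) q

theorem prod_extensionProd_singleton (q : ℕ) :
    ∏ l, extensionProd p [l] q = wordProd p (q + 1) :=
  (extensionProd_succ p [] q).symm

theorem extensionProd_concat_of_getLast_ne {u : List α} {l : α} (h : ∀ x ∈ u.getLast?, x ≠ l)
    (q : ℕ) :
    extensionProd p (u ++ [l]) q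
      = runWeight p u ^ Fintype.card α ^ q * extensionProd p [l] q := by
  simp [extensionProd, runWeight_append_cons p h, prod_mul_distrib]

theorem extensionProd_replicate_succ (k : α) {m : ℕ} (hm : m ≠ 0) (q : ℕ) :
    extensionProd p (List.replicate m k) (q + 1)
      = extensionProd p (List.replicate (m + 1) k) q
        * (p k m ^ ((Fintype.card α - 1) * Fintype.card α ^ q)
          * ∏ l ∈ univ.erase k, extensionProd p [l] q) := by
  have hbreak : ∀ l ∈ univ.erase k, extensionProd p (List.replicate m k ++ [l]) q
      = p k m ^ Fintype.card α ^ q * extensionProd p [l] q := fun l hl => by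
    rw [extensionProd_concat_of_getLast_ne, runWeight_replicate p k hm]
    simpa [List.getLast?_replicate, hm] using (ne_of_mem_erase hl).symm
  rw [extensionProd_succ, ← mul_prod_erase univ _ (mem_univ k), ← List.replicate_succ',
    prod_congr rfl hbreak, prod_mul_distrib, prod_const, card_erase_of_mem (mem_univ k), card_univ,
    ← pow_mul']

theorem prod_extensionProd_replicate_succ {m : ℕ} (hm : m ≠ 0) (q : ℕ) :
    ∏ k, extensionProd p (List.replicate m k) (q + 1)
      = (∏ k, extensionProd p (List.replicate (m + 1) k) q)
        * ((∏ k, p k m ^ ((Fintype.card α - 1) * Fintype.card α ^ q))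
          * wordProd p (q + 1) ^ (Fintype.card α - 1)) := by
  simp_rw [extensionProd_replicate_succ p _ hm, prod_mul_distrib, prod_prod_erase,
    prod_extensionProd_singleton, card_univ]

theorem prod_extensionProd_replicate {m : ℕ} (hm : m ≠ 0) (q : ℕ) :
    ∏ k, extensionProd p (List.replicate m k) q
      = (∏ j ∈ Ico m (m + q),
          ∏ k, p k j ^ ((Fintype.card α - 1) * Fintype.card α ^ (m + q - j - 1)))
        * (∏ k, p k (m + q)) * ∏ j ∈ Icc 1 q, wordProd p j ^ (Fintype.card α - 1) := by
  induction q generalizing m with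
  | zero => simp [extensionProd_zero, runWeight_replicate p _ hm]
  | succ q ih =>
    have hexp : m + (q + 1) - m - 1 = q := by omega
    rw [prod_extensionProd_replicate_succ p hm, ih m.succ_ne_zero,
      prod_eq_prod_Ico_succ_bot (a := m) (by omega), prod_Icc_succ_top (by omega), hexp,
      add_right_comm m 1 q, ← add_assoc m q 1]
    ac_rfl

theorem wordProd_succ (q : ℕ) :
    wordProd p (q + 1)
      = (∏ k, ∏ j ∈ Icc 1 q, p k j ^ ((Fintype.card α - 1) * Fintype.card α ^ (q + 1 - j - 1)))
        * (∏ k, p k (q + 1)) * ∏ j ∈ Icc 1 q, wordProd p j ^ (Fintype.card α - 1) := by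
  have h := prod_extensionProd_replicate p one_ne_zero q
  simp only [List.replicate_one, prod_extensionProd_singleton] at h
  rw [h, add_comm 1 q, Ico_add_one_right_eq_Icc, prod_comm]

end WordProducts

theorem wordProd_ne_zero {α M₀ : Type*} [Fintype α] [DecidableEq α] [CommMonoidWithZero M₀]
    [Nontrivial M₀] [NoZeroDivisors M₀] {p : α → ℕ → M₀} (hp : ∀ k, ∀ j, 1 ≤ j → p k j ≠ 0)
    (q : ℕ) : wordProd p q ≠ 0 :=
  prod_ne_zero_iff.2 fun _ _ => runWeight_ne_zero hp _

theorem runProd_eq_runWeight {n : ℕ} (p : Fin n → ℕ → ℝ) : runProd p = runWeight p := by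
  funext w
  refine congrArg List.prod (List.map_congr_left fun r _ => ?_)
  cases r <;> rfl

theorem sWord_eq_wordProd {n : ℕ} (p : Fin n → ℕ → ℝ) : sWord n p = wordProd p := by
  funext q
  simp only [sWord, wordProd, runProd_eq_runWeight]

theorem stmt_5_general {α G₀ : Type*} [Fintype α] [DecidableEq α] [CommGroupWithZero G₀]
    (p : α → ℕ → G₀) (hp : ∀ k, ∀ j, 1 ≤ j → p k j ≠ 0) (q : ℕ) (hq : 1 ≤ q) :
    wordProd p q / ∏ j ∈ Icc 1 (q - 1), wordProd p j ^ (Fintype.card α - 1)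
      = (∏ k, ∏ j ∈ Icc 1 (q - 1),
          p k j ^ ((Fintype.card α - 1) * Fintype.card α ^ (q - j - 1)))
        * ∏ k, p k q := by
  obtain ⟨q, rfl⟩ := Nat.exists_eq_add_of_le' hq
  rw [div_eq_iff (prod_ne_zero_iff.2 fun j _ => pow_ne_zero _ (wordProd_ne_zero hp j))]
  exact wordProd_succ p q

/-- For an integer `n ≥ 2` and positive reals `p(k,j)` (`1 ≤ k ≤ n`,
`j ≥ 1`), one has `s₁ = ∏_k p(k,1)` and, for every `q ≥ 2`,
`s_q / ∏_{j=1}^{q-1} s_j^(n-1)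
  = (∏_{k=1}^n ∏_{j=1}^{q-1} p(k,j)^((n-1)·n^(q-j-1))) · ∏_{k=1}^n p(k,q)`. -/
theorem stmt_5 (n : ℕ) (hn : 2 ≤ n) (p : Fin n → ℕ → ℝ)
    (hp : ∀ k, ∀ j, 1 ≤ j → 0 < p k j) :
    sWord n p 1 = ∏ k, p k 1 ∧
    ∀ q, 2 ≤ q →
      sWord n p q / ∏ j ∈ Finset.Icc 1 (q - 1), (sWord n p j) ^ (n - 1)
        = (∏ k, ∏ j ∈ Finset.Icc 1 (q - 1), (p k j) ^ ((n - 1) * n ^ (q - j - 1)))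
            * ∏ k, p k q := by
  have h := stmt_5_general p fun k j hj => (hp k j hj).ne'
  simp only [Fintype.card_fin, ← sWord_eq_wordProd] at h
  exact ⟨by simpa using h 1 le_rfl, fun q hq => h q (Nat.one_le_of_lt hq)⟩
end

section
/- Fix an integer n ≥ 2 and positive real numbers p(k,j) > 0 for k ∈ {1,…,n} and integers j ≥ 1. For q ≥ 2 set d_q = (n−1)·Σ_{k=1}^n Σ_{j=1}^{q−1} n^{q−j−1}·log p(k,j) + Σ_{k=1}^n log p(k,q). Then log s₁ = Σ_{k=1}^n log p(k,1), and for every q ≥ 2, log s_q = (n−1)·n^{q−2}·log s₁ + d_q + (n−1)·Σ_{j=2}^{q−1} n^{q−1−j}·d_j. -/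
/-!
Let `S q` be the sum of `log t(w)` over the words `w` of length `q`, and let `D q` be the sum of
`log p (a, j)` over these words, where `a ^ j` is the first run of `w`. Prepending a letter to a
nonempty word either starts a new run or lengthens the first one, and in the second case the new
first run replaces the old one. Each nonempty word has exactly one extension of the second kind, so
`S (q + 1) = n * S q + D (q + 1) - D q`.

The sequence `D` satisfies the same recurrence, `D (q + 1) = n * D q + L (q + 1) - L q` with
`L j = ∑ k, log p (k, j)`: appending a letter changes the first run only if the result is a constant
word. Solving the recurrence for `D` gives `D q = d q` for `q ≥ 2`, and solving it for `S` gives the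
formula for `log s_q`.
-/

section RunTransform

variable {R : Type*} [CommRing R]

/-- The solution `v` (see `eq_runTransform`) of the recurrence
`v (q + 1) = c * v q + u (q + 1) - u q` with `v 1 = u 1`. Sequences are indexed from `1`; in terms
of generating functions this is multiplication by `(1 - z) / (1 - c z)`. -/
def runTransform (c : R) (u : ℕ → R) (q : ℕ) : R :=
  u q + (c - 1) * ∑ j ∈ Finset.Ico 1 q, c ^ (q - 1 - j) * u j

theorem runTransform_one (c : R) (u : ℕ → R) : runTransform c u 1 = u 1 := by
  simp [runTransform]

theorem runTransform_succ (c : R) (u : ℕ → R) {q : ℕ} (hq : 1 ≤ q) :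
    runTransform c u (q + 1) = c * runTransform c u q + u (q + 1) - u q := by
  have hpow : ∑ j ∈ Finset.Ico 1 q, c ^ (q - j) * u j =
      c * ∑ j ∈ Finset.Ico 1 q, c ^ (q - 1 - j) * u j := by
    rw [Finset.mul_sum]
    refine Finset.sum_congr rfl fun j hj => ?_
    have hjq : j < q := (Finset.mem_Ico.mp hj).2
    rw [show q - j = q - 1 - j + 1 by lia, pow_succ']
    ring
  rw [runTransform, runTransform, Nat.add_sub_cancel, Finset.sum_Ico_succ_top hq, hpow,
    Nat.sub_self, pow_zero]
  ring

theorem eq_runTransform {c : R} {u v : ℕ → R} (h_one : v 1 = u 1)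
    (h_succ : ∀ q, 1 ≤ q → v (q + 1) = c * v q + u (q + 1) - u q) {q : ℕ} (hq : 1 ≤ q) :
    v q = runTransform c u q := by
  induction q, hq using Nat.le_induction with
  | base => rw [h_one, runTransform_one]
  | succ q hq ih => rw [h_succ q hq, ih, runTransform_succ c u hq]

theorem runTransform_of_two_le (c : R) (u : ℕ → R) {q : ℕ} (hq : 2 ≤ q) :
    runTransform c u q = (c - 1) * c ^ (q - 2) * u 1 + u q +
      (c - 1) * ∑ j ∈ Finset.Icc 2 (q - 1), c ^ (q - 1 - j) * u j := by
  rw [runTransform, Finset.sum_eq_sum_Ico_succ_bot hq, Finset.Icc_sub_one_right_eq_Ico_of_not_isMin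
    (by rw [isMin_iff_eq_bot, Nat.bot_eq_zero]; lia), Nat.sub_sub]
  ring

theorem runTransform_sum_eq {ι : Type*} [Fintype ι] (c : R) (f : ι → ℕ → R) (q : ℕ) :
    runTransform c (fun j => ∑ k, f k j) q =
      (c - 1) * ∑ k, ∑ j ∈ Finset.Icc 1 (q - 1), c ^ (q - j - 1) * f k j + ∑ k, f k q := by
  have hIcc : Finset.Icc 1 (q - 1) = Finset.Ico 1 q := by ext; simp; lia
  simp only [runTransform, Finset.mul_sum, hIcc, Nat.sub_right_comm q 1]
  rw [Finset.sum_comm, add_comm]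

end RunTransform

section WordSum

variable {α M R : Type*} [Fintype α]

/-- The sum of `g w` over all words `w` of length `q` over the alphabet `α`. Words are lists, and
those of length `q` are enumerated by the functions `Fin q → α`. -/
def wordSum [AddCommMonoid M] (q : ℕ) (g : List α → M) : M :=
  ∑ f : Fin q → α, g (List.ofFn f)

theorem wordSum_zero [AddCommMonoid M] (g : List α → M) : wordSum 0 g = g [] := by
  simp [wordSum]

theorem wordSum_succ [AddCommMonoid M] (q : ℕ) (g : List α → M) :
    wordSum (q + 1) g = ∑ a, wordSum q fun w => g (a :: w) := by
  simp only [wordSum, ← List.ofFn_cons]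
  rw [← Fintype.sum_prod_type']
  exact (Fintype.sum_equiv (Fin.consEquiv fun _ => α) _ _ fun _ => rfl).symm

theorem wordSum_add [AddCommMonoid M] (q : ℕ) (g h : List α → M) :
    wordSum q (fun w => g w + h w) = wordSum q g + wordSum q h :=
  Finset.sum_add_distrib

theorem wordSum_sub [AddCommGroup M] (q : ℕ) (g h : List α → M) :
    wordSum q (fun w => g w - h w) = wordSum q g - wordSum q h :=
  Finset.sum_sub_distrib _ _

theorem wordSum_const [Semiring R] (q : ℕ) (x : R) :
    wordSum q (fun _ : List α => x) = (Fintype.card α : R) ^ q * x := by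
  simp [wordSum]

variable [DecidableEq α] [CommRing R]

theorem wordSum_length_takeWhile_succ (a : α) (g : ℕ → R) (q : ℕ) :
    wordSum (q + 1) (fun w => g (w.takeWhile (· == a)).length) =
      wordSum q (fun w => g ((w.takeWhile (· == a)).length + 1)) +
        ((Fintype.card α : R) - 1) * ((Fintype.card α : R) ^ q * g 0) := by
  have h_cons_ne : ∀ b ∈ Finset.univ.erase a,
      wordSum q (fun w => g ((b :: w).takeWhile (· == a)).length) =
        (Fintype.card α : R) ^ q * g 0 := fun b hb => by
    simp [Finset.ne_of_mem_erase hb, wordSum_const]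
  have h_card : ((Finset.univ.erase a).card : R) = (Fintype.card α : R) - 1 := by
    rw [Finset.cast_card_erase_of_mem (Finset.mem_univ a), Finset.card_univ]
  rw [wordSum_succ, ← Finset.add_sum_erase _ _ (Finset.mem_univ a), Finset.sum_congr rfl h_cons_ne,
    Finset.sum_const, nsmul_eq_mul, h_card]
  simp

theorem wordSum_length_takeWhile_recurrence (a : α) (g : ℕ → R) (q : ℕ) :
    wordSum (q + 1) (fun w => g (w.takeWhile (· == a)).length) =
      (Fintype.card α : R) * wordSum q (fun w => g (w.takeWhile (· == a)).length) +
        g (q + 1) - g q := by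
  induction q generalizing g with
  | zero =>
    simp only [wordSum_length_takeWhile_succ, wordSum_zero, List.takeWhile_nil, List.length_nil]
    ring
  | succ q ih =>
    rw [wordSum_length_takeWhile_succ, ih fun j => g (j + 1), wordSum_length_takeWhile_succ]
    ring

end WordSum

section FirstRun

variable {α M R : Type*} [DecidableEq α]

/-- The value `f a j` of `f` at the first run `a ^ j` of a word; it is `0` at the empty word. -/
def firstRunValue [Zero M] (f : α → ℕ → M) : List α → M
  | [] => 0
  | a :: w => f a ((w.takeWhile (· == a)).length + 1)

theorem wordSum_succ_firstRunValue [Fintype α] [AddCommMonoid M] (f : α → ℕ → M) (q : ℕ) :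
    wordSum (q + 1) (firstRunValue f) =
      ∑ a, wordSum q fun w => f a ((w.takeWhile (· == a)).length + 1) :=
  wordSum_succ q _

theorem wordSum_firstRunValue [Fintype α] [CommRing R] (f : α → ℕ → R) {q : ℕ}
    (hq : 1 ≤ q) :
    wordSum q (firstRunValue f) = runTransform (Fintype.card α : R) (fun j => ∑ a, f a j) q := by
  refine eq_runTransform (v := fun q => wordSum q (firstRunValue f)) ?_ (fun q hq => ?_) hq
  · simp [wordSum_succ_firstRunValue, wordSum_zero]
  · obtain ⟨r, rfl⟩ := Nat.exists_eq_add_of_le' hq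
    have h_rec := fun a => wordSum_length_takeWhile_recurrence a (fun j => f a (j + 1)) r
    simp only [wordSum_succ_firstRunValue, h_rec, Finset.mul_sum, Finset.sum_add_distrib,
      Finset.sum_sub_distrib]

end FirstRun

section RunProd

variable {n : ℕ} (p : Fin n → ℕ → ℝ)

theorem runProd_replicate_append (a : Fin n) (j : ℕ) {w : List (Fin n)}
    (hw : ∀ b ∈ w.head?, b ≠ a) :
    runProd p (List.replicate (j + 1) a ++ w) = p a (j + 1) * runProd p w := by
  have h_run : (List.replicate (j + 1) a).splitBy (· == ·) = [List.replicate (j + 1) a] :=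
    List.splitBy_of_isChain (by simp) (List.isChain_replicate_of_rel _ (by simp))
  have h_boundary : ∀ x ∈ (List.replicate (j + 1) a).getLast?, ∀ b ∈ w.head?, (x == b) = false := by
    intro x hx b hb
    obtain rfl : a = x := by simpa [List.getLast?_replicate] using hx
    simpa using (hw b hb).symm
  rw [runProd, List.splitBy_append h_boundary, h_run]
  simp [runProd, List.replicate_succ]

theorem runProd_cons (a : Fin n) (w : List (Fin n)) :
    runProd p (a :: w) =
      p a ((w.takeWhile (· == a)).length + 1) * runProd p (w.dropWhile (· == a)) := by
  have h_run : w.takeWhile (· == a) = List.replicate (w.takeWhile (· == a)).length a :=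
    List.eq_replicate_iff.mpr ⟨rfl, fun b hb => by simpa using List.mem_takeWhile_imp hb⟩
  have h_head : ∀ b ∈ (w.dropWhile (· == a)).head?, b ≠ a := fun b hb => by
    have h_not := List.head?_dropWhile_not (· == a) w
    rw [Option.mem_def.mp hb] at h_not
    simpa using h_not
  rw [← runProd_replicate_append p a _ h_head, List.replicate_succ, List.cons_append, ← h_run,
    List.takeWhile_append_dropWhile]

variable {p} (hp : ∀ k, ∀ j, 1 ≤ j → 0 < p k j)
include hp

theorem runProd_pos (w : List (Fin n)) : 0 < runProd p w := by
  refine List.prod_pos fun x hx => ?_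
  obtain ⟨r, -, rfl⟩ := List.mem_map.mp hx
  cases r with
  | nil => exact one_pos
  | cons a t => exact hp a _ (Nat.le_add_left 1 _)

theorem log_runProd_cons_cons (a b : Fin n) (w : List (Fin n)) :
    Real.log (runProd p (a :: b :: w)) =
      firstRunValue (fun k j => Real.log (p k j)) (a :: b :: w) + Real.log (runProd p (b :: w)) -
        if a = b then firstRunValue (fun k j => Real.log (p k j)) (b :: w) else 0 := by
  have h_log : ∀ (c : Fin n) (v : List (Fin n)), Real.log (runProd p (c :: v)) =
      firstRunValue (fun k j => Real.log (p k j)) (c :: v) +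
        Real.log (runProd p (v.dropWhile (· == c))) := fun c v => by
    rw [runProd_cons, Real.log_mul (hp c _ (Nat.le_add_left 1 _)).ne' (runProd_pos hp _).ne',
      firstRunValue]
  split_ifs with hab
  · subst hab
    rw [h_log a (a :: w), h_log a w, List.dropWhile_cons_of_pos (by simp)]
    ring
  · rw [h_log a (b :: w), List.dropWhile_cons_of_neg (by simpa using Ne.symm hab), sub_zero]

theorem log_sWord (q : ℕ) :
    Real.log (sWord n p q) = wordSum q fun w => Real.log (runProd p w) :=
  Real.log_prod fun _ _ => (runProd_pos hp _).ne'

theorem log_sWord_one : Real.log (sWord n p 1) = ∑ k, Real.log (p k 1) := by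
  have h_singleton : ∀ k, runProd p [k] = p k 1 := fun k => by
    rw [runProd_cons]
    simp [runProd]
  simp only [log_sWord hp, wordSum_succ 0, wordSum_zero, h_singleton]

theorem log_sWord_succ {q : ℕ} (hq : 1 ≤ q) :
    Real.log (sWord n p (q + 1)) = n * Real.log (sWord n p q) +
      wordSum (q + 1) (firstRunValue fun k j => Real.log (p k j)) -
        wordSum q (firstRunValue fun k j => Real.log (p k j)) := by
  obtain ⟨r, rfl⟩ := Nat.exists_eq_add_of_le' hq
  have h_ite : ∀ (a b : Fin n) (g : List (Fin n) → ℝ),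
      wordSum r (fun w => if a = b then g w else 0) = if a = b then wordSum r g else 0 :=
    fun a b g => by split_ifs <;> simp [wordSum]
  simp only [log_sWord hp, wordSum_succ, log_runProd_cons_cons hp, wordSum_sub, wordSum_add,
    Finset.sum_sub_distrib, Finset.sum_add_distrib, h_ite, Finset.sum_ite_eq, Finset.mem_univ,
    if_true, Finset.sum_const, Finset.card_univ, Fintype.card_fin, nsmul_eq_mul]
  ring

theorem log_sWord_eq_runTransform {q : ℕ} (hq : 1 ≤ q) :
    Real.log (sWord n p q) =
      runTransform (n : ℝ) (runTransform (n : ℝ) fun j => ∑ k, Real.log (p k j)) q := by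
  have h_firstRun : ∀ q, 1 ≤ q → wordSum q (firstRunValue fun k j => Real.log (p k j)) =
      runTransform (n : ℝ) (fun j => ∑ k, Real.log (p k j)) q := fun q hq => by
    rw [wordSum_firstRunValue _ hq, Fintype.card_fin]
  refine eq_runTransform (v := fun q => Real.log (sWord n p q)) ?_ (fun q hq => ?_) hq
  · rw [log_sWord_one hp, runTransform_one]
  · rw [log_sWord_succ hp hq, h_firstRun (q + 1) (Nat.le_add_left 1 q), h_firstRun q hq]

end RunProd

/-- With `d_q = (n-1)·Σ_{k=1}^n Σ_{j=1}^{q-1} n^(q-j-1)·log p(k,j)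
  + Σ_{k=1}^n log p(k,q)` for `q ≥ 2`, one has `log s₁ = Σ_k log p(k,1)` and, for `q ≥ 2`,
`log s_q = (n-1)·n^(q-2)·log s₁ + d_q + (n-1)·Σ_{j=2}^{q-1} n^(q-1-j)·d_j`. -/
theorem stmt_6 (n : ℕ) (hn : 2 ≤ n) (p : Fin n → ℕ → ℝ)
    (hp : ∀ k, ∀ j, 1 ≤ j → 0 < p k j)
    (d : ℕ → ℝ)
    (hd : ∀ q, 2 ≤ q →
      d q = ((n : ℝ) - 1) * ∑ k, ∑ j ∈ Finset.Icc 1 (q - 1),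
              (n : ℝ) ^ (q - j - 1) * Real.log (p k j)
            + ∑ k, Real.log (p k q)) :
    Real.log (sWord n p 1) = ∑ k, Real.log (p k 1) ∧
    ∀ q, 2 ≤ q →
      Real.log (sWord n p q)
        = ((n : ℝ) - 1) * (n : ℝ) ^ (q - 2) * Real.log (sWord n p 1)
            + d q
            + ((n : ℝ) - 1) * ∑ j ∈ Finset.Icc 2 (q - 1), (n : ℝ) ^ (q - 1 - j) * d j := by
  have hs₁ : Real.log (sWord n p 1) = ∑ k, Real.log (p k 1) := log_sWord_one hp
  have hd_eq : ∀ q, 2 ≤ q → d q = runTransform (n : ℝ) (fun j => ∑ k, Real.log (p k j)) q :=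
    fun q hq => by rw [hd q hq, runTransform_sum_eq]
  refine ⟨hs₁, fun q hq => ?_⟩
  have hd_sum : ∑ j ∈ Finset.Icc 2 (q - 1), (n : ℝ) ^ (q - 1 - j) * d j =
      ∑ j ∈ Finset.Icc 2 (q - 1), (n : ℝ) ^ (q - 1 - j) *
        runTransform (n : ℝ) (fun j => ∑ k, Real.log (p k j)) j :=
    Finset.sum_congr rfl fun j hj => by rw [hd_eq j (Finset.mem_Icc.mp hj).1]
  rw [log_sWord_eq_runTransform hp (one_le_two.trans hq), runTransform_of_two_le _ _ hq,
    runTransform_one, hs₁, hd_eq q hq, hd_sum]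
end
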